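/- Let n ∈ ℕ, p⃗, q⃗ ∈ [1,∞]^n and α⃗ ∈ ℝⁿ. Suppose f : ℝⁿ → ℂ is measurable and the quantity S(f) := sup{ |∫_{ℝⁿ} f(x) g(x) dx| : g ∈ U and ‖g‖_{Ė^{-α⃗,p⃗'}_{q⃗'}(ℝⁿ)} = 1 } is finite, where U denotes the set of all simple functions on ℝⁿ that vanish outside A_m for some m ∈ ℕ. Then f ∈ Ė^{α⃗,p⃗}_{q⃗}(ℝⁿ) and S(f) = ‖f‖_{Ė^{α⃗,p⃗}_{q⃗}(ℝⁿ)}. -/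

import Mathlib

open MeasureTheory ENNReal Filter

noncomputable section

/-- The dyadic annulus `R_k = (-2^k, 2^k) \ (-2^(k-1), 2^(k-1))` in `ℝ`. -/
def herzRing (k : ℤ) : Set ℝ :=
  Set.Ioo (-(2 : ℝ) ^ k) ((2 : ℝ) ^ k) \ Set.Ioo (-(2 : ℝ) ^ (k - 1)) ((2 : ℝ) ^ (k - 1))

/-- The `L^q` "norm" (valued in `ℝ≥0∞`) of an `ℝ≥0∞`-valued function on a set `s ⊆ ℝ`,
with the usual modification when `q = ∞`. -/
def lqNormOn (q : ℝ≥0∞) (s : Set ℝ) (g : ℝ → ℝ≥0∞) : ℝ≥0∞ :=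
  if q = ∞ then essSup (s.indicator g) volume
  else (∫⁻ x in s, g x ^ q.toReal) ^ (1 / q.toReal)

/-- The `l^p` norm over `ℤ` of an `ℝ≥0∞`-valued sequence, with the usual modification
when `p = ∞`. -/
def lpZNorm (p : ℝ≥0∞) (a : ℤ → ℝ≥0∞) : ℝ≥0∞ :=
  if p = ∞ then ⨆ k, a k
  else (∑' k : ℤ, a k ^ p.toReal) ^ (1 / p.toReal)

/-- The one-dimensional Herz norm `K^{α,p}_q` of an `ℝ≥0∞`-valued function on `ℝ`. -/
def herzNorm1 (α : ℝ) (p q : ℝ≥0∞) (g : ℝ → ℝ≥0∞) : ℝ≥0∞ :=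
  lpZNorm p fun k => ENNReal.ofReal ((2 : ℝ) ^ ((k : ℝ) * α)) * lqNormOn q (herzRing k) g

/-- The mixed-norm Herz norm on `ℝⁿ` of an `ℝ≥0∞`-valued function: the Herz norm
`K^{α_1,p_1}_{q_1}` is applied in the first variable, then `K^{α_2,p_2}_{q_2}` in the
second variable, …, and finally `K^{α_n,p_n}_{q_n}` in the last variable. -/
def mixedHerzNormE : (n : ℕ) → (Fin n → ℝ) → (Fin n → ℝ≥0∞) → (Fin n → ℝ≥0∞) →
    ((Fin n → ℝ) → ℝ≥0∞) → ℝ≥0∞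
  | 0, _, _, _, f => f fun i => i.elim0
  | n + 1, α, p, q, f =>
    herzNorm1 (α (Fin.last n)) (p (Fin.last n)) (q (Fin.last n)) fun xlast =>
      mixedHerzNormE n (Fin.init α) (Fin.init p) (Fin.init q) fun y => f (Fin.snoc y xlast)

/-- The mixed-norm Herz norm `‖f‖_{Ė^{α,p}_q(ℝⁿ)}` of a complex-valued function on `ℝⁿ`. -/
def herzNormC (n : ℕ) (α : Fin n → ℝ) (p q : Fin n → ℝ≥0∞) (f : (Fin n → ℝ) → ℂ) : ℝ≥0∞ :=
  mixedHerzNormE n α p q fun x => (‖f x‖₊ : ℝ≥0∞)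

/-- `I_m = (-2^m, -2^{-m}] ∪ [2^{-m}, 2^m)`. -/
def herzI (m : ℕ) : Set ℝ :=
  Set.Ioc (-(2 : ℝ) ^ (m : ℤ)) (-(2 : ℝ) ^ (-(m : ℤ))) ∪
    Set.Ico ((2 : ℝ) ^ (-(m : ℤ))) ((2 : ℝ) ^ (m : ℤ))

/-- `A_m = I_m^n ⊆ ℝⁿ`. -/
def herzA (n m : ℕ) : Set (Fin n → ℝ) := Set.univ.pi fun _ => herzI m

/-- The class `H(ℝⁿ)` of simple functions built from finitely many pairwise disjoint
parallelepipeds contained in some `A_m`. -/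
def IsHSimple (n : ℕ) (f : (Fin n → ℝ) → ℂ) : Prop :=
  ∃ (m N : ℕ) (a : Fin N → ℂ) (E : Fin N → Fin n → Set ℝ),
    (∀ k i, MeasurableSet (E k i)) ∧
    (∀ k, Set.univ.pi (E k) ⊆ herzA n m) ∧
    (Pairwise fun k l => Disjoint (Set.univ.pi (E k)) (Set.univ.pi (E l))) ∧
    f = fun x => ∑ k, (Set.univ.pi (E k)).indicator (fun _ => a k) x

/-- The Euclidean ball `B(x,r)` in `ℝⁿ`. -/
def eucBall (n : ℕ) (x : Fin n → ℝ) (r : ℝ) : Set (Fin n → ℝ) :=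
  {y | ∑ i, (y i - x i) ^ 2 < r ^ 2}

/-- The (uncentered) maximal operator in the `k`-th variable. -/
def maxVar (n : ℕ) (k : Fin n) (g : (Fin n → ℝ) → ℝ≥0∞) : (Fin n → ℝ) → ℝ≥0∞ :=
  fun x => ⨆ (a : ℝ) (b : ℝ) (_ : x k ∈ Set.Ioo a b),
    (volume (Set.Ioo a b))⁻¹ * ∫⁻ y in Set.Ioo a b, g (Function.update x k y)

/-- The centered Hardy–Littlewood maximal operator on `ℝⁿ`. -/
def centeredMax (n : ℕ) (g : (Fin n → ℝ) → ℝ≥0∞) : (Fin n → ℝ) → ℝ≥0∞ :=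
  fun x => ⨆ (r : ℝ) (_ : 0 < r),
    (volume (eucBall n x r))⁻¹ * ∫⁻ y in eucBall n x r, g y

/-- The composition `M_n ∘ ⋯ ∘ M_1` of the maximal operators in each variable. -/
def iteratedMax (n : ℕ) (g : (Fin n → ℝ) → ℝ≥0∞) : (Fin n → ℝ) → ℝ≥0∞ :=
  (List.ofFn fun k : Fin n => maxVar n k).foldl (fun h F => F h) g

/-- The iterated maximal operator `ℳ_t(f) = [M_n ⋯ M_1(|f|^t)]^{1/t}`. -/
def iterMaxPow (n : ℕ) (t : ℝ) (f : (Fin n → ℝ) → ℂ) : (Fin n → ℝ) → ℝ≥0∞ :=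
  fun x => iteratedMax n (fun y => (‖f y‖₊ : ℝ≥0∞) ^ t) x ^ (1 / t)

/-- The `l^r`-Herz type mixed norm of a sequence of functions on `ℝⁿ`. -/
def herzSeqNorm (n : ℕ) (r : ℝ≥0∞) (α : Fin n → ℝ) (p q : Fin n → ℝ≥0∞)
    (F : ℤ → (Fin n → ℝ) → ℂ) : ℝ≥0∞ :=
  mixedHerzNormE n α p q fun x => lpZNorm r fun j => (‖F j x‖₊ : ℝ≥0∞)

/-- `N` is a ball quasi-Banach function norm on (nonnegative extended-real-valued)
measurable functions on `ℝⁿ`. -/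
def IsBQBFNorm (n : ℕ) (N : ((Fin n → ℝ) → ℝ≥0∞) → ℝ≥0∞) : Prop :=
  (∀ f : (Fin n → ℝ) → ℝ≥0∞, Measurable f → N f = 0 → f =ᵐ[volume] 0) ∧
  (∀ f g : (Fin n → ℝ) → ℝ≥0∞, Measurable f → Measurable g →
    (∀ᵐ x ∂volume, g x ≤ f x) → N g ≤ N f) ∧
  (∀ (fm : ℕ → (Fin n → ℝ) → ℝ≥0∞) (f : (Fin n → ℝ) → ℝ≥0∞),
    (∀ m, Measurable (fm m)) → Measurable f →
    (∀ᵐ x ∂volume, Monotone (fun m => fm m x) ∧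
      Tendsto (fun m => fm m x) atTop (nhds (f x))) →
    Monotone (fun m => N (fm m)) ∧ Tendsto (fun m => N (fm m)) atTop (nhds (N f))) ∧
  (∀ (x : Fin n → ℝ) (r : ℝ), 0 < r →
    N ((eucBall n x r).indicator fun _ => (1 : ℝ≥0∞)) ≠ ∞)

/-- `N` is a ball Banach function norm: a ball quasi-Banach function norm that moreover
satisfies the triangle inequality and locally dominates the `L¹` norm. -/
def IsBallBanachNorm (n : ℕ) (N : ((Fin n → ℝ) → ℝ≥0∞) → ℝ≥0∞) : Prop :=
  IsBQBFNorm n N ∧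
  (∀ f g : (Fin n → ℝ) → ℝ≥0∞, Measurable f → Measurable g → N (f + g) ≤ N f + N g) ∧
  (∀ (x : Fin n → ℝ) (r : ℝ), 0 < r → ∃ C : ℝ≥0∞, 0 < C ∧ C ≠ ∞ ∧
    ∀ f : (Fin n → ℝ) → ℝ≥0∞, Measurable f → (∫⁻ y in eucBall n x r, f y) ≤ C * N f)

/-- The associate (Köthe dual) norm of a function norm `N`. -/
def assocNormOf (n : ℕ) (N : ((Fin n → ℝ) → ℝ≥0∞) → ℝ≥0∞)
    (f : (Fin n → ℝ) → ℝ≥0∞) : ℝ≥0∞ :=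
  ⨆ (g : (Fin n → ℝ) → ℝ≥0∞) (_ : Measurable g) (_ : N g = 1), ∫⁻ x, f x * g x

/-- The `θ`-convexification of a function norm: `‖f‖_{X^θ} = ‖|f|^θ‖_X^{1/θ}`
(here stated with `θ` in place of `1/p`, so `X^{1/p}` is `convexPow n (1/p) N`). -/
def convexPow (n : ℕ) (θ : ℝ) (N : ((Fin n → ℝ) → ℝ≥0∞) → ℝ≥0∞)
    (f : (Fin n → ℝ) → ℝ≥0∞) : ℝ≥0∞ :=
  N (fun x => f x ^ θ) ^ (1 / θ)

/-- The associate space norm of the mixed-norm Herz space, for complex-valued functions. -/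
def herzAssocNormC (n : ℕ) (α : Fin n → ℝ) (p q : Fin n → ℝ≥0∞)
    (f : (Fin n → ℝ) → ℂ) : ℝ≥0∞ :=
  ⨆ (g : (Fin n → ℝ) → ℂ) (_ : Measurable g) (_ : herzNormC n α p q g = 1),
    ∫⁻ x, (‖f x * g x‖₊ : ℝ≥0∞)

/-!
Hölder's inequality bounds the pairing by the norm; the point is that it is sharp on the unit ball
of the dual norm. For `L^q` the extremizer `f ^ (q - 1) / ‖f‖_q ^ (q - 1)` (or, when `q = ∞`, the
normalized indicators of superlevel sets) shows this, and since it is an explicit formula it depends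
measurably on parameters in `f`. Hence in a mixed norm the extremizer of the inner norm may be
multiplied by that of the outer one, so that sharpness passes to mixed norms. The one-dimensional
Herz norm is itself a mixed norm, `L^q` in the point followed by `ℓ^p` in the annulus, of the
weighted pieces of `f`. Finally, an extremizer is an increasing limit of simple functions supported
where `f` is bounded inside some `A_m`, and the phase of `f` is a limit of simple functions of
modulus at most one.
-/

universe u

section FunctionNorm

variable {X Y : Type u} [MeasurableSpace X] [MeasurableSpace Y]

/-- A function norm on `[0, ∞]`-valued functions, without the triangle inequality. Measurability
in a parameter, which holds for the concrete norms at hand, is part of the definition because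
mixed norms iterate function norms. -/
structure IsFunctionNorm (N : (X → ℝ≥0∞) → ℝ≥0∞) : Prop where
  measurable {Y : Type u} [MeasurableSpace Y] {F : X × Y → ℝ≥0∞} (hF : Measurable F) :
    Measurable fun y => N fun x => F (x, y)
  mono {f g : X → ℝ≥0∞} (hfg : f ≤ g) : N f ≤ N g
  const_mul (c : ℝ≥0∞) {f : X → ℝ≥0∞} (hf : Measurable f) : N (fun x => c * f x) = c * N f

/-- A jointly measurable family of functions in the unit ball of `N`; the second variable is the
parameter. -/
structure IsUnitBallFamily (N : (X → ℝ≥0∞) → ℝ≥0∞) (G : X × Y → ℝ≥0∞) : Prop where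
  measurable : Measurable G
  le_one (y : Y) : N (fun x => G (x, y)) ≤ 1

/-- Hölder's inequality for `N` and `N'`, together with its sharpness: the unit ball of `N'` norms
`N`. The norming functions can be chosen jointly measurably in a parameter, which is what makes
this notion stable under the formation of mixed norms. -/
structure IsNormingPair (μ : Measure X) (N N' : (X → ℝ≥0∞) → ℝ≥0∞) : Prop where
  left : IsFunctionNorm N
  right : IsFunctionNorm N'
  lintegral_mul_le {f g : X → ℝ≥0∞} (hf : Measurable f) (hg : Measurable g) :
    ∫⁻ x, f x * g x ∂μ ≤ N f * N' g
  exists_norming {Y : Type u} [MeasurableSpace Y] {F : X × Y → ℝ≥0∞} (hF : Measurable F) :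
    ∃ G : ℕ → X × Y → ℝ≥0∞, (∀ j, IsUnitBallFamily N' (G j)) ∧
      ∀ y, N (fun x => F (x, y)) ≤ ⨆ j, ∫⁻ x, F (x, y) * G j (x, y) ∂μ

variable {μ : Measure X} {N N' : (X → ℝ≥0∞) → ℝ≥0∞}

theorem IsUnitBallFamily.exists_lintegral_mul_eq_max [SFinite μ] {F G K : X × Y → ℝ≥0∞}
    (hF : Measurable F) (hG : IsUnitBallFamily N' G) (hK : IsUnitBallFamily N' K) :
    ∃ H : X × Y → ℝ≥0∞, IsUnitBallFamily N' H ∧ ∀ y, ∫⁻ x, F (x, y) * H (x, y) ∂μ =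
      max (∫⁻ x, F (x, y) * G (x, y) ∂μ) (∫⁻ x, F (x, y) * K (x, y) ∂μ) := by
  classical
  let s : Set Y := {y | ∫⁻ x, F (x, y) * G (x, y) ∂μ ≤ ∫⁻ x, F (x, y) * K (x, y) ∂μ}
  have hs : MeasurableSet s :=
    measurableSet_le (hF.mul hG.measurable).lintegral_prod_left'
      (hF.mul hK.measurable).lintegral_prod_left'
  refine ⟨fun z => if z.2 ∈ s then K z else G z,
    ⟨.ite (measurable_snd hs) hK.measurable hG.measurable, fun y => ?_⟩, fun y => ?_⟩
  · by_cases hy : y ∈ s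
    · simpa only [hy, if_true] using hK.le_one y
    · simpa only [hy, if_false] using hG.le_one y
  · by_cases hy : y ∈ s
    · simpa only [hy, if_true] using (max_eq_right hy).symm
    · simpa only [hy, if_false] using (max_eq_left (le_of_not_ge hy)).symm

theorem IsNormingPair.exists_monotone_norming [SFinite μ] (h : IsNormingPair μ N N')
    {F : X × Y → ℝ≥0∞} (hF : Measurable F) :
    ∃ G : ℕ → X × Y → ℝ≥0∞, (∀ j, IsUnitBallFamily N' (G j)) ∧
      (∀ y, Monotone fun j => ∫⁻ x, F (x, y) * G j (x, y) ∂μ) ∧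
      ∀ y, N (fun x => F (x, y)) ≤ ⨆ j, ∫⁻ x, F (x, y) * G j (x, y) ∂μ := by
  obtain ⟨G, hG, hle⟩ := h.exists_norming hF
  have exists_partialSups (j : ℕ) : ∃ K : X × Y → ℝ≥0∞, IsUnitBallFamily N' K ∧
      ∀ y, ∫⁻ x, F (x, y) * K (x, y) ∂μ =
        partialSups (fun i => ∫⁻ x, F (x, y) * G i (x, y) ∂μ) j := by
    induction j with
    | zero => exact ⟨G 0, hG 0, fun y => by rw [partialSups_zero]⟩
    | succ j ih =>
      obtain ⟨K, hK, hKeq⟩ := ih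
      obtain ⟨H, hH, hHeq⟩ := hK.exists_lintegral_mul_eq_max (μ := μ) hF (hG (j + 1))
      exact ⟨H, hH, fun y => by rw [hHeq, hKeq, partialSups_add_one]⟩
  choose K hK hKeq using exists_partialSups
  refine ⟨K, hK, fun y => ?_, fun y => ?_⟩
  · simpa only [hKeq] using (partialSups_monotone _)
  · simpa only [hKeq, iSup_partialSups_eq] using hle y

end FunctionNorm

section ELpNorm

variable {X Y : Type u} [MeasurableSpace X] [MeasurableSpace Y] {μ : Measure X} {q q' : ℝ≥0∞}

theorem lt_essSup_iff_measure_ne_zero {f : X → ℝ≥0∞} {c : ℝ≥0∞} :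
    c < essSup f μ ↔ μ {x | c < f x} ≠ 0 := by
  have essSup_le_iff : essSup f μ ≤ c ↔ ∀ᵐ x ∂μ, f x ≤ c :=
    ⟨fun h => (ENNReal.ae_le_essSup f).mono fun _ hx => hx.trans h, essSup_le_of_ae_le c⟩
  rw [← not_le, essSup_le_iff, ae_iff]
  simp only [not_le, ne_eq]

theorem eLpNorm_eq_lintegral_rpow (hq : q ≠ 0) (hq_top : q ≠ ∞) (f : X → ℝ≥0∞) :
    eLpNorm f q μ = (∫⁻ x, f x ^ q.toReal ∂μ) ^ (1 / q.toReal) := by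
  simp only [eLpNorm_eq_lintegral_rpow_enorm_toReal hq hq_top, enorm_eq_self]

theorem eLpNorm_top_eq_essSup (f : X → ℝ≥0∞) : eLpNorm f ∞ μ = essSup f μ := by
  simp only [eLpNorm_exponent_top, eLpNormEssSup, enorm_eq_self]

theorem eLpNorm_one_eq_lintegral (f : X → ℝ≥0∞) : eLpNorm f 1 μ = ∫⁻ x, f x ∂μ := by
  simp only [eLpNorm_one_eq_lintegral_enorm, enorm_eq_self]

theorem measurable_eLpNorm_prodMk_right [SFinite μ] {F : X × Y → ℝ≥0∞} (hF : Measurable F) :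
    Measurable fun y => eLpNorm (fun x => F (x, y)) q μ := by
  rcases eq_or_ne q 0 with rfl | hq
  · simp only [eLpNorm_exponent_zero, measurable_const]
  rcases eq_or_ne q ∞ with rfl | hq_top
  · simp only [eLpNorm_top_eq_essSup]
    refine measurable_of_Ioi fun c => ?_
    have preimage_Ioi : (fun y => essSup (fun x => F (x, y)) μ) ⁻¹' Set.Ioi c =
        {y | μ ((fun x => (x, y)) ⁻¹' {z | c < F z}) ≠ 0} :=
      Set.ext fun y => lt_essSup_iff_measure_ne_zero
    rw [preimage_Ioi]
    exact (measurable_measure_prodMk_right (measurableSet_lt measurable_const hF)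
      (measurableSet_singleton 0)).compl
  · simp only [eLpNorm_eq_lintegral_rpow hq hq_top]
    exact (hF.pow_const _).lintegral_prod_left'.pow_const _

theorem eLpNorm_ennreal_const_mul {c : ℝ≥0∞} {f : X → ℝ≥0∞} (h : c ≠ ∞ ∨ Measurable f) :
    eLpNorm (fun x => c * f x) q μ = c * eLpNorm f q μ := by
  rcases eq_or_ne q 0 with rfl | hq
  · simp only [eLpNorm_exponent_zero, mul_zero]
  rcases eq_or_ne q ∞ with rfl | hq_top
  · simp only [eLpNorm_top_eq_essSup, ENNReal.essSup_const_mul]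
  · have hpos : 0 < q.toReal := ENNReal.toReal_pos hq hq_top
    have lintegral_rpow :
        ∫⁻ x, c ^ q.toReal * f x ^ q.toReal ∂μ = c ^ q.toReal * ∫⁻ x, f x ^ q.toReal ∂μ :=
      h.elim (fun hc => lintegral_const_mul' _ _ (ENNReal.rpow_ne_top_of_nonneg hpos.le hc))
        fun hf => lintegral_const_mul _ (hf.pow_const _)
    simp only [eLpNorm_eq_lintegral_rpow hq hq_top, ENNReal.mul_rpow_of_nonneg _ _ hpos.le]
    rw [lintegral_rpow, ENNReal.mul_rpow_of_nonneg _ _ (by positivity), ← ENNReal.rpow_mul,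
      mul_one_div_cancel hpos.ne', ENNReal.rpow_one]

theorem isFunctionNorm_eLpNorm [SFinite μ] : IsFunctionNorm fun f => eLpNorm f q μ where
  measurable hF := measurable_eLpNorm_prodMk_right hF
  mono hfg := eLpNorm_mono_enorm hfg
  const_mul _ _ hf := eLpNorm_ennreal_const_mul (.inr hf)

theorem lintegral_mul_le_eLpNorm_mul_eLpNorm [HolderConjugate q q'] {f g : X → ℝ≥0∞}
    (hf : Measurable f) (hg : Measurable g) :
    ∫⁻ x, f x * g x ∂μ ≤ eLpNorm f q μ * eLpNorm g q' μ := by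
  have le_of_top_one {f g : X → ℝ≥0∞} (hg : Measurable g) :
      ∫⁻ x, f x * g x ∂μ ≤ eLpNorm f ∞ μ * eLpNorm g 1 μ := by
    rw [eLpNorm_top_eq_essSup, eLpNorm_one_eq_lintegral, ← lintegral_const_mul _ hg]
    exact lintegral_mono_ae ((ENNReal.ae_le_essSup f).mono fun x hx => by gcongr)
  rcases eq_or_ne q ∞ with rfl | hq
  · obtain rfl := HolderConjugate.unique ∞ q' 1
    exact le_of_top_one hg
  rcases eq_or_ne q' ∞ with rfl | hq'
  · obtain rfl := HolderConjugate.unique ∞ q 1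
    simpa only [mul_comm] using le_of_top_one (f := g) hf
  · rw [eLpNorm_eq_lintegral_rpow (HolderConjugate.ne_zero q q') hq,
      eLpNorm_eq_lintegral_rpow (HolderConjugate.ne_zero q' q) hq']
    exact ENNReal.lintegral_mul_le_Lp_mul_Lq μ (HolderConjugate.toReal_of_ne_top hq hq')
      hf.aemeasurable hg.aemeasurable

theorem eLpNorm_iSup_of_monotone (hq : q ≠ 0) (hq_top : q ≠ ∞) {f : ℕ → X → ℝ≥0∞}
    (hf : ∀ n, Measurable (f n)) (hmono : Monotone f) :
    eLpNorm (fun x => ⨆ n, f n x) q μ = ⨆ n, eLpNorm (f n) q μ := by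
  have hpos : 0 < q.toReal := ENNReal.toReal_pos hq hq_top
  have iSup_rpow {r : ℝ} (hr : 0 < r) (u : ℕ → ℝ≥0∞) : (⨆ n, u n) ^ r = ⨆ n, u n ^ r :=
    (ENNReal.orderIsoRpow r hr).map_iSup u
  simp only [eLpNorm_eq_lintegral_rpow hq hq_top, iSup_rpow hpos]
  rw [lintegral_iSup (fun n => (hf n).pow_const _)
    fun i j hij x => ENNReal.rpow_le_rpow (hmono hij x) hpos.le, iSup_rpow (by positivity)]

theorem exists_monotone_iSup_eq_top_eLpNorm_ne_top (μ : Measure X) [SigmaFinite μ] (q : ℝ≥0∞) :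
    ∃ φ : ℕ → X → ℝ≥0∞, (∀ n, Measurable (φ n)) ∧ Monotone φ ∧ (∀ x, ⨆ n, φ n x = ∞) ∧
      ∀ n, eLpNorm (φ n) q μ ≠ ∞ := by
  refine ⟨fun n => (spanningSets μ n).indicator fun _ => (n : ℝ≥0∞),
    fun n => measurable_const.indicator (measurableSet_spanningSets μ n), fun m n hmn => ?_,
    fun x => ?_, fun n => ?_⟩
  · exact (Set.indicator_mono fun _ => Nat.cast_le.2 hmn).trans
      (Set.indicator_le_indicator_of_subset (monotone_spanningSets μ hmn) fun _ => zero_le)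
  · obtain ⟨m, hm⟩ := Set.mem_iUnion.1 ((iUnion_spanningSets μ).ge (Set.mem_univ x))
    refine top_le_iff.1 (ENNReal.iSup_natCast.ge.trans (iSup_le fun n => ?_))
    refine le_iSup_of_le (max m n) ?_
    simpa only [Set.indicator_of_mem (monotone_spanningSets μ (le_max_left m n) hm)]
      using Nat.cast_le.2 (le_max_right m n)
  · refine ((eLpNorm_indicator_const_le _ q).trans_lt (ENNReal.mul_lt_top ?_ ?_)).ne
    · simp only [enorm_eq_self, ENNReal.natCast_lt_top]
    · exact ENNReal.rpow_lt_top_of_nonneg (by positivity) (measure_spanningSets_lt_top μ n).ne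

/-- The function `f ^ (q - 1) / ‖f‖_q ^ (q - 1)`, the extremizer in Hölder's inequality for
`1 < q < ∞`. -/
def holderExtremizer (μ : Measure X) (q : ℝ≥0∞) (f : X → ℝ≥0∞) (x : X) : ℝ≥0∞ :=
  (eLpNorm f q μ ^ (q.toReal - 1))⁻¹ * f x ^ (q.toReal - 1)

theorem measurable_holderExtremizer_prodMk_right [SFinite μ] {F : X × Y → ℝ≥0∞}
    (hF : Measurable F) :
    Measurable fun z : X × Y => holderExtremizer μ q (fun x => F (x, z.2)) z.1 :=
  (((measurable_eLpNorm_prodMk_right hF).comp measurable_snd).pow_const _).inv.mul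
    (hF.pow_const _)

theorem eLpNorm_holderExtremizer_le_one [HolderConjugate q q'] (hq : q ≠ ∞) (hq' : q' ≠ ∞)
    {f : X → ℝ≥0∞} (hf : Measurable f) : eLpNorm (holderExtremizer μ q f) q' μ ≤ 1 := by
  have hconj : q.toReal.HolderConjugate q'.toReal := HolderConjugate.toReal_of_ne_top hq hq'
  have eLpNorm_rpow :
      eLpNorm (fun x => f x ^ (q.toReal - 1)) q' μ = eLpNorm f q μ ^ (q.toReal - 1) := by
    have exponents : 1 / q.toReal * (q.toReal - 1) = 1 / q'.toReal := by
      rw [mul_sub, one_div_mul_cancel hconj.ne_zero, mul_one, one_div, hconj.one_sub_inv, one_div]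
    simp only [eLpNorm_eq_lintegral_rpow (HolderConjugate.ne_zero q' q) hq',
      eLpNorm_eq_lintegral_rpow (HolderConjugate.ne_zero q q') hq, ← ENNReal.rpow_mul,
      hconj.sub_one_mul_conj, exponents]
  unfold holderExtremizer
  rw [eLpNorm_ennreal_const_mul (.inr <| hf.pow_const _), eLpNorm_rpow]
  exact ENNReal.inv_mul_le_one _

theorem eLpNorm_le_lintegral_mul_holderExtremizer (hq : 1 ≤ q) (hq_top : q ≠ ∞)
    {f : X → ℝ≥0∞} (hf : Measurable f) (hfq : eLpNorm f q μ ≠ ∞) :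
    eLpNorm f q μ ≤ ∫⁻ x, f x * holderExtremizer μ q f x ∂μ := by
  have hq0 : q ≠ 0 := (zero_lt_one.trans_le hq).ne'
  have hs : 1 ≤ q.toReal := by simpa using (ENNReal.toReal_le_toReal one_ne_top hq_top).2 hq
  have self_mul_rpow (a : ℝ≥0∞) : a * a ^ (q.toReal - 1) = a ^ q.toReal := by
    simpa using (ENNReal.rpow_add_of_nonneg (x := a) 1 _ zero_le_one (sub_nonneg.2 hs)).symm
  have lintegral_rpow : ∫⁻ x, f x ^ q.toReal ∂μ = eLpNorm f q μ ^ q.toReal := by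
    rw [eLpNorm_eq_lintegral_rpow hq0 hq_top, ← ENNReal.rpow_mul,
      one_div_mul_cancel (zero_lt_one.trans_le hs).ne', ENNReal.rpow_one]
  simp only [holderExtremizer, mul_left_comm (f _), self_mul_rpow]
  rw [lintegral_const_mul _ (hf.pow_const _), lintegral_rpow, ← self_mul_rpow, mul_left_comm]
  rcases eq_or_ne (eLpNorm f q μ) 0 with h0 | h0
  · rw [h0]
    exact zero_le
  · rw [ENNReal.inv_mul_cancel, mul_one]
    · exact (ENNReal.rpow_pos (pos_iff_ne_zero.2 h0) hfq).ne'
    · exact ENNReal.rpow_ne_top_of_nonneg (sub_nonneg.2 hs) hfq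

theorem exists_monotone_eLpNorm_ne_top_iSup_eq [SigmaFinite μ] {F : X × Y → ℝ≥0∞}
    (hF : Measurable F) (q : ℝ≥0∞) :
    ∃ T : ℕ → X × Y → ℝ≥0∞, (∀ j, Measurable (T j)) ∧ Monotone T ∧ (∀ z, ⨆ j, T j z = F z) ∧
      ∀ j y, eLpNorm (fun x => T j (x, y)) q μ ≠ ∞ := by
  obtain ⟨φ, hφ, hφ_mono, hφ_iSup, hφ_norm⟩ := exists_monotone_iSup_eq_top_eLpNorm_ne_top μ q
  refine ⟨fun j z => F z ⊓ φ j z.1, fun j => hF.min ((hφ j).comp measurable_fst),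
    fun i j hij z => inf_le_inf_left _ (hφ_mono hij z.1), fun z => ?_, fun j y => ?_⟩
  · rw [← inf_iSup_eq, hφ_iSup, inf_top_eq]
  · exact ne_top_of_le_ne_top (hφ_norm j) (eLpNorm_mono_enorm fun _ => inf_le_right)

theorem exists_norming_eLpNorm_of_ne_top [SigmaFinite μ] [HolderConjugate q q'] (hq : q ≠ ∞)
    (hq' : q' ≠ ∞) {F : X × Y → ℝ≥0∞} (hF : Measurable F) :
    ∃ G : ℕ → X × Y → ℝ≥0∞, (∀ j, IsUnitBallFamily (fun g => eLpNorm g q' μ) (G j)) ∧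
      ∀ y, eLpNorm (fun x => F (x, y)) q μ ≤ ⨆ j, ∫⁻ x, F (x, y) * G j (x, y) ∂μ := by
  obtain ⟨T, hT, hT_mono, hT_iSup, hT_norm⟩ :=
    exists_monotone_eLpNorm_ne_top_iSup_eq (μ := μ) hF q
  have hT_section (y : Y) (j : ℕ) : Measurable fun x => T j (x, y) :=
    (hT j).comp measurable_prodMk_right
  have hnorm (y : Y) (j : ℕ) : eLpNorm (holderExtremizer μ q fun x => T j (x, y)) q' μ ≤ 1 :=
    eLpNorm_holderExtremizer_le_one hq hq' (hT_section y j)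
  refine ⟨fun j z => holderExtremizer μ q (fun x => T j (x, z.2)) z.1, fun j =>
    ⟨measurable_holderExtremizer_prodMk_right (hT j), fun y => hnorm y j⟩, fun y => ?_⟩
  simp only [← hT_iSup]
  rw [eLpNorm_iSup_of_monotone (HolderConjugate.ne_zero q q') hq (hT_section y)
    fun i j hij x => hT_mono hij (x, y)]
  refine iSup_mono fun j => (eLpNorm_le_lintegral_mul_holderExtremizer
    (HolderConjugate.one_le q q') hq (hT_section y j) (hT_norm j y)).trans ?_
  exact lintegral_mono fun x => mul_le_mul_left (le_iSup (fun i => T i (x, y)) j) _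

/-- The indicator function of `s` divided by `μ s`, which nearly norms `‖f‖_∞` when `s` is a
superlevel set of `f`. -/
def normalizedIndicator (μ : Measure X) (s : Set X) (x : X) : ℝ≥0∞ :=
  (μ s)⁻¹ * s.indicator 1 x

theorem measurable_normalizedIndicator_prodMk_right [SFinite μ] {E : Set (X × Y)}
    (hE : MeasurableSet E) :
    Measurable fun z : X × Y => normalizedIndicator μ ((fun x => (x, z.2)) ⁻¹' E) z.1 :=
  ((measurable_measure_prodMk_right hE).inv.comp measurable_snd).mul
    (measurable_one.indicator hE)

theorem lintegral_normalizedIndicator {s : Set X} (hs : MeasurableSet s) :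
    ∫⁻ x, normalizedIndicator μ s x ∂μ = (μ s)⁻¹ * μ s := by
  simp only [normalizedIndicator]
  rw [lintegral_const_mul _ (measurable_one.indicator hs), lintegral_indicator_one hs]

theorem le_lintegral_mul_normalizedIndicator {s : Set X} (hs : MeasurableSet s) (h0 : μ s ≠ 0)
    (htop : μ s ≠ ∞) {c : ℝ≥0∞} {f : X → ℝ≥0∞} (hf : ∀ x ∈ s, c ≤ f x) :
    c ≤ ∫⁻ x, f x * normalizedIndicator μ s x ∂μ := by
  have hmeas : Measurable (normalizedIndicator μ s) := (measurable_one.indicator hs).const_mul _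
  calc c = ∫⁻ x, c * normalizedIndicator μ s x ∂μ := by
        rw [lintegral_const_mul _ hmeas, lintegral_normalizedIndicator hs,
          ENNReal.inv_mul_cancel h0 htop, mul_one]
    _ ≤ ∫⁻ x, f x * normalizedIndicator μ s x ∂μ := by
        refine lintegral_mono fun x => ?_
        by_cases hx : x ∈ s
        · exact mul_le_mul_left (hf x hx) _
        · simp only [normalizedIndicator, Set.indicator_of_notMem hx, mul_zero, le_refl]

theorem exists_norming_eLpNorm_top [SigmaFinite μ] {F : X × Y → ℝ≥0∞} (hF : Measurable F) :
    ∃ G : ℕ → X × Y → ℝ≥0∞, (∀ j, IsUnitBallFamily (fun g => eLpNorm g 1 μ) (G j)) ∧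
      ∀ y, eLpNorm (fun x => F (x, y)) ∞ μ ≤ ⨆ j, ∫⁻ x, F (x, y) * G j (x, y) ∂μ := by
  let c : ℕ → ℝ≥0∞ := TopologicalSpace.denseSeq ℝ≥0∞
  let E (n k : ℕ) : Set (X × Y) := {z | z.1 ∈ spanningSets μ n ∧ c k < F z}
  have hE (n k : ℕ) : MeasurableSet (E n k) :=
    (measurable_fst (measurableSet_spanningSets μ n)).inter (measurableSet_lt measurable_const hF)
  have hE_section (n k : ℕ) (y : Y) : MeasurableSet ((fun x => (x, y)) ⁻¹' E n k) :=
    measurable_prodMk_right (hE n k)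
  let G (n k : ℕ) (z : X × Y) : ℝ≥0∞ := normalizedIndicator μ ((fun x => (x, z.2)) ⁻¹' E n k) z.1
  have hG (n k : ℕ) : IsUnitBallFamily (fun g => eLpNorm g 1 μ) (G n k) :=
    ⟨measurable_normalizedIndicator_prodMk_right (hE n k), fun y => by
      rw [eLpNorm_one_eq_lintegral]
      exact (lintegral_normalizedIndicator (hE_section n k y)).trans_le (ENNReal.inv_mul_le_one _)⟩
  refine ⟨fun j => G j.unpair.1 j.unpair.2, fun j => hG _ _, fun y => ?_⟩
  rw [eLpNorm_top_eq_essSup, iSup_unpair fun n k => ∫⁻ x, F (x, y) * G n k (x, y) ∂μ]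
  refine le_of_forall_lt fun d hd => ?_
  obtain ⟨_, ⟨k, rfl⟩, hdk, hk⟩ :=
    (TopologicalSpace.denseRange_denseSeq ℝ≥0∞).exists_between hd
  have hcover : {x | c k < F (x, y)} = ⋃ n, (fun x => (x, y)) ⁻¹' E n k := by
    change {x | c k < F (x, y)} = ⋃ n, spanningSets μ n ∩ {x | c k < F (x, y)}
    rw [← Set.iUnion_inter, iUnion_spanningSets, Set.univ_inter]
  rw [lt_essSup_iff_measure_ne_zero, hcover, Ne, measure_iUnion_null_iff, not_forall] at hk
  obtain ⟨n, hn⟩ := hk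
  have htop : μ ((fun x => (x, y)) ⁻¹' E n k) ≠ ∞ :=
    ((measure_mono fun x hx => hx.1).trans_lt (measure_spanningSets_lt_top μ n)).ne
  exact hdk.trans_le (le_iSup₂_of_le n k
    (le_lintegral_mul_normalizedIndicator (hE_section n k y) hn htop fun x hx => hx.2.le))

theorem isNormingPair_eLpNorm [SigmaFinite μ] [HolderConjugate q q'] :
    IsNormingPair μ (fun f => eLpNorm f q μ) (fun g => eLpNorm g q' μ) where
  left := isFunctionNorm_eLpNorm
  right := isFunctionNorm_eLpNorm
  lintegral_mul_le := lintegral_mul_le_eLpNorm_mul_eLpNorm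
  exists_norming {Y} _ {F} hF := by
    rcases eq_or_ne q ∞ with rfl | hq
    · obtain rfl := HolderConjugate.unique ∞ q' 1
      exact exists_norming_eLpNorm_top hF
    rcases eq_or_ne q' ∞ with rfl | hq'
    · obtain rfl := HolderConjugate.unique ∞ q 1
      refine ⟨fun _ _ => 1, fun _ => ⟨measurable_const, fun _ => ?_⟩, fun y => ?_⟩
      · rw [eLpNorm_top_eq_essSup]
        exact essSup_le_of_ae_le _ (ae_of_all _ fun _ => le_rfl)
      · simp only [eLpNorm_one_eq_lintegral, mul_one, ciSup_const, le_refl]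
    · exact exists_norming_eLpNorm_of_ne_top hq hq' hF

end ELpNorm

section MixedNorm

variable {X₁ X₂ : Type u} [MeasurableSpace X₁] [MeasurableSpace X₂] {μ₁ : Measure X₁}
  {μ₂ : Measure X₂} {N₁ N₁' : (X₁ → ℝ≥0∞) → ℝ≥0∞} {N₂ N₂' : (X₂ → ℝ≥0∞) → ℝ≥0∞}

/-- The mixed norm on a product which applies `N₁` in the first variable and then `N₂` in the
second one. -/
def mixedNorm (N₁ : (X₁ → ℝ≥0∞) → ℝ≥0∞) (N₂ : (X₂ → ℝ≥0∞) → ℝ≥0∞) (f : X₁ × X₂ → ℝ≥0∞) : ℝ≥0∞ :=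
  N₂ fun x₂ => N₁ fun x₁ => f (x₁, x₂)

theorem IsFunctionNorm.mixed (h₁ : IsFunctionNorm N₁) (h₂ : IsFunctionNorm N₂) :
    IsFunctionNorm (mixedNorm N₁ N₂) where
  measurable {Y} _ {F} hF := h₂.measurable (F := fun z => N₁ fun x₁ => F ((x₁, z.1), z.2)) <|
    h₁.measurable (F := fun z : X₁ × X₂ × Y => F ((z.1, z.2.1), z.2.2)) (hF.comp (by fun_prop))
  mono hfg := h₂.mono fun x₂ => h₁.mono fun x₁ => hfg (x₁, x₂)
  const_mul c f hf := by
    unfold mixedNorm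
    rw [← h₂.const_mul c (h₁.measurable hf)]
    exact congrArg N₂ (funext fun x₂ => h₁.const_mul c (hf.comp measurable_prodMk_right))

theorem IsNormingPair.lintegral_mul_le_mixedNorm [SFinite μ₁] [SFinite μ₂]
    (h₁ : IsNormingPair μ₁ N₁ N₁') (h₂ : IsNormingPair μ₂ N₂ N₂') {f g : X₁ × X₂ → ℝ≥0∞}
    (hf : Measurable f) (hg : Measurable g) :
    ∫⁻ z, f z * g z ∂μ₁.prod μ₂ ≤ mixedNorm N₁ N₂ f * mixedNorm N₁' N₂' g := by
  calc ∫⁻ z, f z * g z ∂μ₁.prod μ₂ = ∫⁻ x₂, ∫⁻ x₁, f (x₁, x₂) * g (x₁, x₂) ∂μ₁ ∂μ₂ :=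
        lintegral_prod_symm _ (hf.mul hg).aemeasurable
    _ ≤ ∫⁻ x₂, (N₁ fun x₁ => f (x₁, x₂)) * N₁' fun x₁ => g (x₁, x₂) ∂μ₂ :=
        lintegral_mono fun x₂ => h₁.lintegral_mul_le (hf.comp measurable_prodMk_right)
          (hg.comp measurable_prodMk_right)
    _ ≤ mixedNorm N₁ N₂ f * mixedNorm N₁' N₂' g :=
        h₂.lintegral_mul_le (h₁.left.measurable hf) (h₁.right.measurable hg)

theorem IsUnitBallFamily.mixed {Y : Type u} [MeasurableSpace Y] (h₁ : IsFunctionNorm N₁)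
    (h₂ : IsFunctionNorm N₂) {G : X₁ × X₂ × Y → ℝ≥0∞} {H : X₂ × Y → ℝ≥0∞}
    (hG : IsUnitBallFamily N₁ G) (hH : IsUnitBallFamily N₂ H) :
    IsUnitBallFamily (mixedNorm N₁ N₂)
      fun z : (X₁ × X₂) × Y => H (z.1.2, z.2) * G (z.1.1, z.1.2, z.2) where
  measurable := (hH.measurable.comp (by fun_prop)).mul (hG.measurable.comp (by fun_prop))
  le_one y := by
    refine (h₂.mono fun x₂ => ?_).trans (hH.le_one y)
    have hG_section : Measurable fun x₁ => G (x₁, x₂, y) :=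
      hG.measurable.comp measurable_prodMk_right
    refine (h₁.const_mul (H (x₂, y)) hG_section).trans_le ?_
    exact mul_le_of_le_one_right' (hG.le_one (x₂, y))

theorem IsNormingPair.mixed [SFinite μ₁] [SFinite μ₂] (h₁ : IsNormingPair μ₁ N₁ N₁')
    (h₂ : IsNormingPair μ₂ N₂ N₂') :
    IsNormingPair (μ₁.prod μ₂) (mixedNorm N₁ N₂) (mixedNorm N₁' N₂') where
  left := h₁.left.mixed h₂.left
  right := h₁.right.mixed h₂.right
  lintegral_mul_le := h₁.lintegral_mul_le_mixedNorm h₂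
  exists_norming {Y} _ {F} hF := by
    have hF₁ : Measurable fun z : X₁ × X₂ × Y => F ((z.1, z.2.1), z.2.2) :=
      hF.comp (by fun_prop)
    obtain ⟨G, hG, hG_mono, hG_le⟩ := h₁.exists_monotone_norming hF₁
    obtain ⟨H, hH, hH_le⟩ := h₂.exists_norming (h₁.left.measurable hF₁)
    have hFG (i : ℕ) : Measurable fun z : X₁ × X₂ × Y => F ((z.1, z.2.1), z.2.2) * G i z :=
      hF₁.mul (hG i).measurable
    let K (j i : ℕ) (z : (X₁ × X₂) × Y) : ℝ≥0∞ := H j (z.1.2, z.2) * G i (z.1.1, z.1.2, z.2)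
    have hK (j i : ℕ) : IsUnitBallFamily (mixedNorm N₁' N₂') (K j i) :=
      (hG i).mixed h₁.right h₂.right (hH j)
    refine ⟨fun k => K k.unpair.1 k.unpair.2, fun k => hK _ _, fun y => ?_⟩
    rw [iSup_unpair fun j i => ∫⁻ z, F (z, y) * K j i (z, y) ∂μ₁.prod μ₂]
    refine (hH_le y).trans (iSup_mono fun j => ?_)
    have hH_section : Measurable fun x₂ => H j (x₂, y) :=
      (hH j).measurable.comp measurable_prodMk_right
    calc ∫⁻ x₂, (N₁ fun x₁ => F ((x₁, x₂), y)) * H j (x₂, y) ∂μ₂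
        ≤ ∫⁻ x₂, ⨆ i, (∫⁻ x₁, F ((x₁, x₂), y) * G i (x₁, x₂, y) ∂μ₁) * H j (x₂, y) ∂μ₂ :=
          lintegral_mono fun x₂ => by
            rw [← ENNReal.iSup_mul]
            exact mul_le_mul_left (hG_le (x₂, y)) _
      _ = ⨆ i, ∫⁻ x₂, (∫⁻ x₁, F ((x₁, x₂), y) * G i (x₁, x₂, y) ∂μ₁) * H j (x₂, y) ∂μ₂ :=
          lintegral_iSup
            (fun i => ((hFG i).lintegral_prod_left'.comp measurable_prodMk_right).mul hH_section)
            fun i k hik x₂ => mul_le_mul_left (hG_mono (x₂, y) hik) _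
      _ = ⨆ i, ∫⁻ z, F (z, y) * K j i (z, y) ∂μ₁.prod μ₂ := by
          have hFK (i : ℕ) : Measurable fun z => F (z, y) * K j i (z, y) :=
            (hF.mul (hK j i).measurable).comp measurable_prodMk_right
          refine iSup_congr fun i => ?_
          rw [lintegral_prod_symm _ (hFK i).aemeasurable]
          refine lintegral_congr fun x₂ => ?_
          have hFG_section : Measurable fun x₁ => F ((x₁, x₂), y) * G i (x₁, x₂, y) :=
            (hFG i).comp (measurable_prodMk_right (y := (x₂, y)))
          rw [← lintegral_mul_const _ hFG_section]
          exact lintegral_congr fun x₁ => by simp only [K]; ring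

end MixedNorm

section BlockNorm

open Function

variable {X Y ι : Type u} {R : ι → Set X} {w w' : ι → ℝ≥0∞}

/-- The weighted pieces `w k * f` on `R k` of a function `f`, as a function of the point and the
index of the piece. -/
def weightedPieces (R : ι → Set X) (w : ι → ℝ≥0∞) (f : X → ℝ≥0∞) (z : X × ι) : ℝ≥0∞ :=
  (R z.2).indicator (fun x => w z.2 * f x) z.1

/-- The adjoint of `weightedPieces`: the sum over `k` of the functions `w k * Φ (·, k)` on `R k`. -/
def gluePieces (R : ι → Set X) (w : ι → ℝ≥0∞) (Φ : X × ι → ℝ≥0∞) (x : X) : ℝ≥0∞ :=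
  ∑' k, (R k).indicator (fun x => w k * Φ (x, k)) x

theorem gluePieces_eq_of_mem (hdisj : Pairwise (Disjoint on R)) {k : ι} {x : X} (hx : x ∈ R k)
    (Φ : X × ι → ℝ≥0∞) : gluePieces R w Φ x = w k * Φ (x, k) := by
  rw [gluePieces, tsum_eq_single k, Set.indicator_of_mem hx]
  exact fun l hl => Set.indicator_of_notMem (Set.disjoint_left.1 (hdisj hl.symm) hx) _

theorem weightedPieces_gluePieces_le (hdisj : Pairwise (Disjoint on R))
    (hw : ∀ k, w k * w' k = 1) (Φ : X × ι → ℝ≥0∞) :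
    weightedPieces R w' (gluePieces R w Φ) ≤ Φ := by
  rintro ⟨x, k⟩
  by_cases hx : x ∈ R k
  · rw [weightedPieces, Set.indicator_of_mem hx, gluePieces_eq_of_mem hdisj hx,
      ← mul_assoc, mul_comm (w' k), hw, one_mul]
  · rw [weightedPieces, Set.indicator_of_notMem hx]
    exact zero_le

variable [MeasurableSpace X] {μ : Measure X}

theorem gluePieces_weightedPieces_ae_eq (hdisj : Pairwise (Disjoint on R))
    (hcover : ∀ᵐ x ∂μ, ∃ k, x ∈ R k) (hw : ∀ k, w k * w' k = 1) (g : X → ℝ≥0∞) :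
    gluePieces R w (weightedPieces R w' g) =ᵐ[μ] g := by
  filter_upwards [hcover] with x ⟨k, hx⟩
  rw [gluePieces_eq_of_mem hdisj hx, weightedPieces, Set.indicator_of_mem hx, ← mul_assoc, hw,
    one_mul]

variable [MeasurableSpace Y] [Countable ι] [MeasurableSpace ι]

theorem measurable_gluePieces_prodMk_right (hR : ∀ k, MeasurableSet (R k)) (w : ι → ℝ≥0∞)
    {Φ : (X × ι) × Y → ℝ≥0∞} (hΦ : Measurable Φ) :
    Measurable fun z : X × Y => gluePieces R w (fun u => Φ (u, z.2)) z.1 :=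
  .tsum fun k => ((hΦ.comp (by fun_prop : Measurable fun z : X × Y =>
    ((z.1, k), z.2))).const_mul (w k)).indicator (measurable_fst (hR k))

variable [MeasurableSingletonClass ι] {M M' : (X × ι → ℝ≥0∞) → ℝ≥0∞}

theorem measurableSet_mem_piece (hR : ∀ k, MeasurableSet (R k)) :
    MeasurableSet {z : X × ι | z.1 ∈ R z.2} := by
  have : {z : X × ι | z.1 ∈ R z.2} = ⋃ k, R k ×ˢ {k} := by
    ext ⟨x, k⟩
    simp
  rw [this]
  exact .iUnion fun k => (hR k).prod (measurableSet_singleton k)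

theorem measurable_weightedPieces_prodMk_right (hR : ∀ k, MeasurableSet (R k)) (w : ι → ℝ≥0∞)
    {F : X × Y → ℝ≥0∞} (hF : Measurable F) :
    Measurable fun z : (X × ι) × Y => weightedPieces R w (fun x => F (x, z.2)) z.1 :=
  (((measurable_of_countable w).comp (by fun_prop : Measurable fun z : (X × ι) × Y => z.1.2)).mul
    (hF.comp (by fun_prop : Measurable fun z : (X × ι) × Y => (z.1.1, z.2)))).indicator
    (measurable_fst (measurableSet_mem_piece hR))

theorem measurable_weightedPieces (hR : ∀ k, MeasurableSet (R k)) (w : ι → ℝ≥0∞) {f : X → ℝ≥0∞}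
    (hf : Measurable f) : Measurable (weightedPieces R w f) :=
  (((measurable_of_countable w).comp measurable_snd).mul (hf.comp measurable_fst)).indicator
    (measurableSet_mem_piece hR)

theorem lintegral_weightedPieces_mul (hR : ∀ k, MeasurableSet (R k)) {f : X → ℝ≥0∞}
    (hf : Measurable f) {Φ : X × ι → ℝ≥0∞} (hΦ : Measurable Φ) :
    ∫⁻ z, weightedPieces R w f z * Φ z ∂μ.prod .count = ∫⁻ x, f x * gluePieces R w Φ x ∂μ := by
  have hmeas : Measurable fun z => weightedPieces R w f z * Φ z :=
    (measurable_weightedPieces hR w hf).mul hΦ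
  rw [lintegral_prod _ hmeas.aemeasurable]
  refine lintegral_congr fun x => ?_
  rw [lintegral_count, gluePieces, ← ENNReal.tsum_mul_left]
  refine tsum_congr fun k => ?_
  by_cases hx : x ∈ R k
  · simp only [weightedPieces, Set.indicator_of_mem hx]
    ring
  · simp only [weightedPieces, Set.indicator_of_notMem hx, zero_mul, mul_zero]

theorem IsFunctionNorm.comp_weightedPieces (hM : IsFunctionNorm M) (hR : ∀ k, MeasurableSet (R k))
    (w : ι → ℝ≥0∞) : IsFunctionNorm fun f => M (weightedPieces R w f) where
  measurable hF := hM.measurable (measurable_weightedPieces_prodMk_right hR w hF)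
  mono hfg := hM.mono fun z => Set.indicator_le_indicator (mul_le_mul_right (hfg z.1) _)
  const_mul c f hf := by
    rw [← hM.const_mul c (measurable_weightedPieces hR w hf)]
    refine congrArg M (funext fun z => ?_)
    simp only [weightedPieces, mul_left_comm _ c, Set.indicator_const_mul]

theorem IsNormingPair.comp_weightedPieces (hM : IsNormingPair (μ.prod .count) M M')
    (hR : ∀ k, MeasurableSet (R k)) (hdisj : Pairwise (Disjoint on R))
    (hcover : ∀ᵐ x ∂μ, ∃ k, x ∈ R k) (hw : ∀ k, w k * w' k = 1) :
    IsNormingPair μ (fun f => M (weightedPieces R w f)) fun g => M' (weightedPieces R w' g) where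
  left := hM.left.comp_weightedPieces hR w
  right := hM.right.comp_weightedPieces hR w'
  lintegral_mul_le {f g} hf hg := by
    calc ∫⁻ x, f x * g x ∂μ
        = ∫⁻ x, f x * gluePieces R w (weightedPieces R w' g) x ∂μ :=
          lintegral_congr_ae <| (gluePieces_weightedPieces_ae_eq hdisj hcover hw g).mono
            fun x hx => by simp only [hx]
      _ = ∫⁻ z, weightedPieces R w f z * weightedPieces R w' g z ∂μ.prod .count :=
          (lintegral_weightedPieces_mul hR hf (measurable_weightedPieces hR w' hg)).symm
      _ ≤ _ := hM.lintegral_mul_le (measurable_weightedPieces hR w hf)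
          (measurable_weightedPieces hR w' hg)
  exists_norming {Y} _ {F} hF := by
    obtain ⟨Φ, hΦ, hle⟩ := hM.exists_norming (measurable_weightedPieces_prodMk_right hR w hF)
    refine ⟨fun j z => gluePieces R w (fun u => Φ j (u, z.2)) z.1, fun j =>
      ⟨measurable_gluePieces_prodMk_right hR w (hΦ j).measurable, fun y => ?_⟩, fun y => ?_⟩
    · exact (hM.right.mono (weightedPieces_gluePieces_le hdisj hw _)).trans ((hΦ j).le_one y)
    · refine (hle y).trans (iSup_mono fun j => ?_)
      exact (lintegral_weightedPieces_mul hR (hF.comp measurable_prodMk_right)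
        ((hΦ j).measurable.comp measurable_prodMk_right)).le

end BlockNorm

section HerzNorm

open Function

theorem mem_herzRing {k : ℤ} {x : ℝ} :
    x ∈ herzRing k ↔ (2 : ℝ) ^ (k - 1) ≤ |x| ∧ |x| < (2 : ℝ) ^ k := by
  rw [herzRing, Set.mem_sdiff, Set.mem_Ioo, Set.mem_Ioo, ← abs_lt, ← abs_lt, not_lt, and_comm]

theorem measurableSet_herzRing (k : ℤ) : MeasurableSet (herzRing k) :=
  measurableSet_Ioo.diff measurableSet_Ioo

theorem pairwise_disjoint_herzRing : Pairwise (Disjoint on herzRing) := by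
  refine (pairwise_disjoint_on herzRing).2 fun k l hkl => Set.disjoint_left.2 fun x hk hl => ?_
  have hpow : (2 : ℝ) ^ k ≤ 2 ^ (l - 1) := zpow_le_zpow_right₀ one_le_two (by lia)
  exact ((mem_herzRing.1 hk).2.trans_le hpow).not_ge (mem_herzRing.1 hl).1

theorem ae_exists_mem_herzRing : ∀ᵐ x : ℝ, ∃ k, x ∈ herzRing k := by
  filter_upwards [Measure.ae_ne volume 0] with x hx
  obtain ⟨k, hk⟩ := _root_.exists_mem_Ico_zpow (abs_pos.2 hx) one_lt_two
  exact ⟨k + 1, mem_herzRing.2 (by simpa using hk)⟩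

/-- The weight `2 ^ (k α)` of the dyadic annulus `herzRing k` in the Herz norm. -/
def herzWeight (α : ℝ) (k : ℤ) : ℝ≥0∞ := ENNReal.ofReal ((2 : ℝ) ^ ((k : ℝ) * α))

theorem herzWeight_mul_herzWeight_neg (α : ℝ) (k : ℤ) :
    herzWeight α k * herzWeight (-α) k = 1 := by
  rw [herzWeight, herzWeight, ← ENNReal.ofReal_mul (by positivity), ← Real.rpow_add two_pos]
  simp

variable {p p' q q' : ℝ≥0∞}

theorem lqNormOn_eq_eLpNorm_indicator (hq : q ≠ 0) {s : Set ℝ} (hs : MeasurableSet s)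
    (g : ℝ → ℝ≥0∞) : lqNormOn q s g = eLpNorm (s.indicator g) q volume := by
  rw [lqNormOn]
  split_ifs with hq_top
  · rw [hq_top, eLpNorm_top_eq_essSup]
  · rw [eLpNorm_indicator_eq_eLpNorm_restrict hs, eLpNorm_eq_lintegral_rpow hq hq_top]

theorem lpZNorm_eq_eLpNorm_count (hp : p ≠ 0) (a : ℤ → ℝ≥0∞) :
    lpZNorm p a = eLpNorm a p .count := by
  rw [lpZNorm]
  split_ifs with hp_top
  · rw [hp_top, eLpNorm_top_eq_essSup, essSup_count]
  · rw [eLpNorm_eq_lintegral_rpow hp hp_top, lintegral_count]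

theorem herzNorm1_eq_mixedNorm (α : ℝ) (hp : p ≠ 0) (hq : q ≠ 0) :
    herzNorm1 α p q = fun f => mixedNorm (fun g => eLpNorm g q volume)
      (fun a => eLpNorm a p .count) (weightedPieces herzRing (herzWeight α) f) := by
  funext f
  rw [herzNorm1, lpZNorm_eq_eLpNorm_count hp, mixedNorm]
  congr 1 with k
  rw [lqNormOn_eq_eLpNorm_indicator hq (measurableSet_herzRing k),
    ← eLpNorm_ennreal_const_mul (.inl ofReal_ne_top)]
  simp only [weightedPieces, herzWeight, Set.indicator_const_mul]

theorem isNormingPair_herzNorm1 (α : ℝ) [HolderConjugate p p'] [HolderConjugate q q'] :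
    IsNormingPair volume (herzNorm1 α p q) (herzNorm1 (-α) p' q') := by
  rw [herzNorm1_eq_mixedNorm α (HolderConjugate.ne_zero p p') (HolderConjugate.ne_zero q q'),
    herzNorm1_eq_mixedNorm (-α) (HolderConjugate.ne_zero p' p) (HolderConjugate.ne_zero q' q)]
  exact (isNormingPair_eLpNorm.mixed isNormingPair_eLpNorm).comp_weightedPieces
    measurableSet_herzRing pairwise_disjoint_herzRing ae_exists_mem_herzRing
    (herzWeight_mul_herzWeight_neg α)

end HerzNorm

section MixedHerzNorm

variable {X Z : Type u} [MeasurableSpace X] [MeasurableSpace Z]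

theorem IsFunctionNorm.comp_measurableEquiv {N : (Z → ℝ≥0∞) → ℝ≥0∞} (h : IsFunctionNorm N)
    (e : X ≃ᵐ Z) : IsFunctionNorm fun f => N (f ∘ e.symm) where
  measurable {Y} _ {F} hF :=
    h.measurable (F := fun z : Z × Y => F (e.symm z.1, z.2)) (hF.comp (by fun_prop))
  mono hfg := h.mono fun z => hfg (e.symm z)
  const_mul c _ hf := h.const_mul c (hf.comp e.symm.measurable)

theorem IsNormingPair.comp_measurableEquiv {μ : Measure X} {ν : Measure Z}
    {N N' : (Z → ℝ≥0∞) → ℝ≥0∞} (h : IsNormingPair ν N N') {e : X ≃ᵐ Z}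
    (he : MeasurePreserving e μ ν) :
    IsNormingPair μ (fun f => N (f ∘ e.symm)) fun g => N' (g ∘ e.symm) where
  left := h.left.comp_measurableEquiv e
  right := h.right.comp_measurableEquiv e
  lintegral_mul_le {f g} hf hg := by
    rw [← (he.symm e).lintegral_comp (f := fun x => f x * g x) (hf.mul hg)]
    exact h.lintegral_mul_le (hf.comp e.symm.measurable) (hg.comp e.symm.measurable)
  exists_norming {Y} _ {F} hF := by
    obtain ⟨G, hG, hG_le⟩ := h.exists_norming (F := fun z : Z × Y => F (e.symm z.1, z.2))
      (hF.comp (by fun_prop))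
    refine ⟨fun j z => G j (e z.1, z.2), fun j =>
      ⟨(hG j).measurable.comp (by fun_prop), fun y => ?_⟩, fun y => ?_⟩
    · simpa [Function.comp_def] using (hG j).le_one y
    · refine (hG_le y).trans_eq (iSup_congr fun j => ?_)
      rw [← he.lintegral_comp_emb e.measurableEmbedding]
      simp only [e.symm_apply_apply]

theorem isNormingPair_dirac [MeasurableSingletonClass X] (a : X) :
    IsNormingPair (.dirac a) (fun f => f a) fun g => g a where
  left := ⟨fun hF => hF.comp measurable_prodMk_left, fun hfg => hfg a, fun _ _ _ => rfl⟩
  right := ⟨fun hF => hF.comp measurable_prodMk_left, fun hfg => hfg a, fun _ _ _ => rfl⟩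
  lintegral_mul_le {f g} _ _ := (lintegral_dirac a fun x => f x * g x).le
  exists_norming _ := ⟨fun _ _ => 1, fun _ => ⟨measurable_const, fun _ => le_rfl⟩, fun y => by
    simp only [lintegral_dirac, mul_one, ciSup_const, le_refl]⟩

/-- The identification of `ℝⁿ⁺¹` with `ℝⁿ × ℝ` which splits off the last coordinate. -/
def splitLast (n : ℕ) : (Fin (n + 1) → ℝ) ≃ᵐ (Fin n → ℝ) × ℝ :=
  (MeasurableEquiv.piFinSuccAbove (fun _ => ℝ) (Fin.last n)).trans .prodComm

theorem splitLast_symm_apply {n : ℕ} (z : (Fin n → ℝ) × ℝ) :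
    (splitLast n).symm z = Fin.snoc z.1 z.2 :=
  Fin.insertNth_last' z.2 z.1

theorem measurePreserving_splitLast (n : ℕ) : MeasurePreserving (splitLast n) :=
  Measure.measurePreserving_swap.comp
    (volume_preserving_piFinSuccAbove (fun _ => ℝ) (Fin.last n))

theorem mixedHerzNormE_succ {n : ℕ} (α : Fin (n + 1) → ℝ) (p q : Fin (n + 1) → ℝ≥0∞) :
    mixedHerzNormE (n + 1) α p q = fun f =>
      mixedNorm (mixedHerzNormE n (Fin.init α) (Fin.init p) (Fin.init q))
        (herzNorm1 (α (Fin.last n)) (p (Fin.last n)) (q (Fin.last n)))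
        (f ∘ (splitLast n).symm) := by
  funext f
  simp only [mixedNorm, mixedHerzNormE, Function.comp_apply, splitLast_symm_apply]

theorem isNormingPair_mixedHerzNormE {n : ℕ} (α : Fin n → ℝ) {p q p' q' : Fin n → ℝ≥0∞}
    (hp : ∀ i, HolderConjugate (p i) (p' i)) (hq : ∀ i, HolderConjugate (q i) (q' i)) :
    IsNormingPair volume (mixedHerzNormE n α p q) (mixedHerzNormE n (-α) p' q') := by
  induction n with
  | zero =>
    rw [volume_pi, Measure.pi_of_empty (x := fun i => i.elim0)]
    exact isNormingPair_dirac _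
  | succ n ih =>
    have hinit := ih (Fin.init α) (fun i => hp i.castSucc) fun i => hq i.castSucc
    have := hp (Fin.last n)
    have := hq (Fin.last n)
    have hlast : IsNormingPair volume
        (herzNorm1 (α (Fin.last n)) (p (Fin.last n)) (q (Fin.last n)))
        (herzNorm1 (-α (Fin.last n)) (p' (Fin.last n)) (q' (Fin.last n))) :=
      isNormingPair_herzNorm1 _
    rw [mixedHerzNormE_succ, mixedHerzNormE_succ]
    exact (hinit.mixed hlast).comp_measurableEquiv (measurePreserving_splitLast n)

end MixedHerzNorm

section Pairing

open scoped ComplexConjugate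

variable {X : Type u} [MeasurableSpace X] {μ : Measure X} {𝕜 : Type*} [RCLike 𝕜]

theorem exists_measurable_mul_eq_norm {f : X → 𝕜} (hf : Measurable f) :
    ∃ u : X → 𝕜, Measurable u ∧ (∀ x, ‖u x‖ ≤ 1) ∧ ∀ x, f x * u x = ‖f x‖ := by
  refine ⟨fun x => conj (f x) / ‖f x‖, ?_, fun x => ?_, fun x => ?_⟩
  · exact (RCLike.continuous_conj.measurable.comp hf).div (RCLike.measurable_ofReal.comp hf.norm)
  · rw [norm_div, RCLike.norm_conj, RCLike.norm_ofReal, abs_norm]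
    exact div_self_le_one _
  · rw [← mul_div_assoc, RCLike.mul_conj, sq, mul_self_div_self]

theorem lintegral_enorm_le_of_forall_simpleFunc {f : X → 𝕜} (hf : Measurable f)
    (hf_int : Integrable f μ) {S : ℝ≥0∞}
    (hS : ∀ u : SimpleFunc X 𝕜, (∀ x, ‖u x‖ ≤ 1) → ‖∫ x, f x * u x ∂μ‖ₑ ≤ S) :
    ∫⁻ x, ‖f x‖ₑ ∂μ ≤ S := by
  obtain ⟨u, hu, hu_le, hfu⟩ := exists_measurable_mul_eq_norm hf
  have hu_mem (x : X) : u x ∈ Metric.closedBall (0 : 𝕜) 1 := mem_closedBall_zero_iff.2 (hu_le x)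
  have h0 : (0 : 𝕜) ∈ Metric.closedBall 0 1 := Metric.mem_closedBall_self zero_le_one
  let v : ℕ → SimpleFunc X 𝕜 := SimpleFunc.approxOn u hu _ 0 h0
  have hv_le (k : ℕ) (x : X) : ‖v k x‖ ≤ 1 :=
    mem_closedBall_zero_iff.1 (SimpleFunc.approxOn_mem hu h0 k x)
  have hv_tendsto (x : X) : Tendsto (fun k => f x * v k x) atTop (nhds (f x * u x)) :=
    (SimpleFunc.tendsto_approxOn hu h0 (subset_closure (hu_mem x))).const_mul (f x)
  have tendsto_integral :
      Tendsto (fun k => ∫ x, f x * v k x ∂μ) atTop (nhds (∫ x, f x * u x ∂μ)) :=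
    tendsto_integral_of_dominated_convergence (fun x => ‖f x‖)
      (fun k => (hf.mul (v k).measurable).aestronglyMeasurable) hf_int.norm
      (fun k => .of_forall fun x =>
        (norm_mul_le _ _).trans (mul_le_of_le_one_right (norm_nonneg _) (hv_le k x)))
      (.of_forall hv_tendsto)
  have enorm_integral : ‖∫ x, f x * u x ∂μ‖ₑ = ∫⁻ x, ‖f x‖ₑ ∂μ := by
    simp only [hfu]
    rw [integral_ofReal, ← ofReal_norm, RCLike.norm_ofReal,
      abs_of_nonneg (integral_nonneg fun x => norm_nonneg _),
      ofReal_integral_norm_eq_lintegral_enorm hf_int]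
  rw [← enorm_integral]
  exact le_of_tendsto' tendsto_integral.enorm fun k => hS (v k) (hv_le k)

theorem lintegral_mul_eq_iSup_eapprox_restrict {B : ℕ → Set X} (hB : ∀ m, MeasurableSet (B m))
    (hB_mono : Monotone B) (hB_cover : ∀ᵐ x ∂μ, ∃ m, x ∈ B m) {φ G : X → ℝ≥0∞}
    (hφ : Measurable φ) (hG : Measurable G) :
    ∫⁻ x, φ x * G x ∂μ = ⨆ m, ∫⁻ x, φ x * (SimpleFunc.eapprox G m).restrict (B m) x ∂μ := by
  have restrict_mono : Monotone fun m => ⇑((SimpleFunc.eapprox G m).restrict (B m)) := by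
    intro i j hij x
    simp only [SimpleFunc.restrict_apply _ (hB _)]
    exact (Set.indicator_le_indicator_of_subset (hB_mono hij) (fun _ => zero_le) x).trans
      (Set.indicator_le_indicator (SimpleFunc.monotone_eapprox G hij x))
  rw [← lintegral_iSup (f := fun m x => φ x * (SimpleFunc.eapprox G m).restrict (B m) x)
    (fun m => hφ.mul (SimpleFunc.measurable _))
    fun i j hij x => mul_le_mul_right (restrict_mono hij x) _]
  refine lintegral_congr_ae (hB_cover.mono fun x ⟨m, hm⟩ => ?_)
  beta_reduce
  rw [← ENNReal.mul_iSup, ← SimpleFunc.iSup_eapprox_apply hG x]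
  refine congrArg _ ?_
  refine le_antisymm (iSup_le fun k => ?_) (iSup_mono fun k => ?_)
  · refine (SimpleFunc.monotone_eapprox G (le_max_left k m) x).trans ?_
    refine le_iSup_of_le (max k m) ?_
    rw [SimpleFunc.restrict_apply _ (hB _),
      Set.indicator_of_mem (hB_mono (le_max_right k m) hm)]
  · rw [SimpleFunc.restrict_apply _ (hB _)]
    exact Set.indicator_le_self _ _ x

theorem exists_exhaustion_norm_le {A : ℕ → Set X} (hA : ∀ m, MeasurableSet (A m))
    (hA_mono : Monotone A) (hA_cover : ∀ᵐ x ∂μ, ∃ m, x ∈ A m) {f : X → 𝕜} (hf : Measurable f) :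
    ∃ B : ℕ → Set X, (∀ m, MeasurableSet (B m)) ∧ Monotone B ∧ (∀ᵐ x ∂μ, ∃ m, x ∈ B m) ∧
      (∀ m, B m ⊆ A m) ∧ ∀ m, ∀ x ∈ B m, ‖f x‖ ≤ m := by
  refine ⟨fun m => A m ∩ {x | ‖f x‖ ≤ m},
    fun m => (hA m).inter (measurableSet_le hf.norm measurable_const), fun i j hij x hx =>
      ⟨hA_mono hij hx.1, (show ‖f x‖ ≤ i from hx.2).trans (Nat.cast_le.2 hij)⟩,
    hA_cover.mono fun x ⟨m, hm⟩ => ?_, fun m => Set.inter_subset_left, fun m x hx => hx.2⟩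
  obtain ⟨k, hk⟩ := exists_nat_ge ‖f x‖
  exact ⟨max m k, hA_mono (le_max_left m k) hm, hk.trans (Nat.cast_le.2 (le_max_right m k))⟩

theorem lintegral_enorm_mul_simpleFunc_ne_top {f : X → 𝕜} {V : SimpleFunc X ℝ≥0∞} {s : Set X}
    (hs : μ s ≠ ∞) (hV_supp : Function.support V ⊆ s) (hV_top : ∀ x, V x ≠ ∞) {C : ℕ}
    (hfs : ∀ x ∈ s, ‖f x‖ ≤ C) : ∫⁻ x, ‖f x‖ₑ * V x ∂μ ≠ ∞ := by
  have hV_int : ∫⁻ x, V x ∂μ ≠ ∞ := by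
    rw [V.lintegral_eq_lintegral]
    refine (SimpleFunc.FinMeasSupp.lintegral_lt_top ?_ (.of_forall hV_top)).ne
    exact SimpleFunc.finMeasSupp_iff_support.2 ((measure_mono hV_supp).trans_lt hs.lt_top)
  refine ne_top_of_le_ne_top (mul_ne_top (natCast_ne_top C) hV_int) ?_
  rw [← lintegral_const_mul _ V.measurable]
  refine lintegral_mono fun x => ?_
  by_cases hx : V x = 0
  · rw [hx, mul_zero, mul_zero]
  · refine mul_le_mul_left ?_ (V x)
    rw [← ofReal_norm, ← ENNReal.ofReal_natCast]
    exact ENNReal.ofReal_le_ofReal (hfs x (hV_supp hx))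

variable {N N' : (X → ℝ≥0∞) → ℝ≥0∞} {f g : X → 𝕜}

theorem IsNormingPair.enorm_integral_mul_le (h : IsNormingPair μ N N') (hf : Measurable f)
    (hg : Measurable g) :
    ‖∫ x, f x * g x ∂μ‖ₑ ≤ N (fun x => ‖f x‖ₑ) * N' fun x => ‖g x‖ₑ := by
  refine (enorm_integral_le_lintegral_enorm _).trans ?_
  simp only [enorm_mul]
  exact h.lintegral_mul_le hf.enorm hg.enorm

theorem IsNormingPair.enorm_integral_mul_le_of_forall_normalized (h : IsNormingPair μ N N')
    (hf : Measurable f) (hg : Measurable g) (hg_le : N' (fun x => ‖g x‖ₑ) ≤ 1) {S : ℝ≥0∞}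
    (hS : ∀ c : 𝕜, N' (fun x => ‖c * g x‖ₑ) = 1 → ‖∫ x, f x * (c * g x) ∂μ‖ₑ ≤ S) :
    ‖∫ x, f x * g x ∂μ‖ₑ ≤ S := by
  let b : ℝ≥0∞ := N' fun x => ‖g x‖ₑ
  rcases eq_or_ne b 0 with hb | hb
  · refine (h.enorm_integral_mul_le hf hg).trans ?_
    rw [show (N' fun x => ‖g x‖ₑ) = 0 from hb, mul_zero]
    exact zero_le
  let c : 𝕜 := (b⁻¹.toReal : ℝ)
  have hc : ‖c‖ₑ = b⁻¹ := by
    rw [← ofReal_norm, RCLike.norm_ofReal, abs_of_nonneg toReal_nonneg,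
      ENNReal.ofReal_toReal (ENNReal.inv_ne_top.2 hb)]
  have hc_normalized : N' (fun x => ‖c * g x‖ₑ) = 1 := by
    simp only [enorm_mul]
    rw [h.right.const_mul _ hg.enorm, hc]
    exact ENNReal.inv_mul_cancel hb (ne_top_of_le_ne_top one_ne_top hg_le)
  calc ‖∫ x, f x * g x ∂μ‖ₑ ≤ b⁻¹ * ‖∫ x, f x * g x ∂μ‖ₑ :=
        le_mul_of_one_le_left' (ENNReal.one_le_inv.2 hg_le)
    _ = ‖∫ x, f x * (c * g x) ∂μ‖ₑ := by
        simp only [mul_left_comm _ c, integral_const_mul, enorm_mul, hc]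
    _ ≤ S := hS c hc_normalized

theorem IsNormingPair.lintegral_enorm_mul_le_of_forall_simpleFunc (h : IsNormingPair μ N N')
    (hf : Measurable f) {V : SimpleFunc X ℝ≥0∞} (hV_top : ∀ x, V x ≠ ∞) (hV : N' V ≤ 1)
    (hfV : ∫⁻ x, ‖f x‖ₑ * V x ∂μ ≠ ∞) {S : ℝ≥0∞}
    (hS : ∀ g : SimpleFunc X 𝕜, Function.support g ⊆ Function.support V →
      N' (fun x => ‖g x‖ₑ) = 1 → ‖∫ x, f x * g x ∂μ‖ₑ ≤ S) :
    ∫⁻ x, ‖f x‖ₑ * V x ∂μ ≤ S := by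
  let v : SimpleFunc X 𝕜 := V.map fun a => (a.toReal : 𝕜)
  have enorm_v (x : X) : ‖v x‖ₑ = V x := by
    rw [SimpleFunc.map_apply, ← ofReal_norm, RCLike.norm_ofReal, abs_of_nonneg toReal_nonneg,
      ENNReal.ofReal_toReal (hV_top x)]
  have enorm_fv (x : X) : ‖f x * v x‖ₑ = ‖f x‖ₑ * V x := by rw [enorm_mul, enorm_v]
  have fv_integrable : Integrable (fun x => f x * v x) μ :=
    ⟨(hf.mul v.measurable).aestronglyMeasurable, by
      simpa only [HasFiniteIntegral, enorm_fv] using hfV.lt_top⟩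
  simp only [← enorm_fv]
  refine lintegral_enorm_le_of_forall_simpleFunc (hf.mul v.measurable) fv_integrable
    fun u hu => ?_
  simp only [Pi.mul_apply, mul_assoc]
  have vu_le : N' (fun x => ‖(v * u) x‖ₑ) ≤ 1 := by
    refine (h.right.mono fun x => ?_).trans hV
    rw [SimpleFunc.mul_apply, enorm_mul, enorm_v]
    have enorm_u : ‖u x‖ₑ ≤ 1 := by
      rw [← ofReal_norm]
      exact ENNReal.ofReal_le_one.2 (hu x)
    exact mul_le_of_le_one_right' enorm_u
  refine h.enorm_integral_mul_le_of_forall_normalized hf (v * u).measurable vu_le fun c hc => ?_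
  refine hS (SimpleFunc.const X c * (v * u)) (fun x hx hVx => hx ?_) hc
  have hvx : v x = 0 := by rw [← enorm_eq_zero, enorm_v, hVx]
  simp only [SimpleFunc.mul_apply, hvx, zero_mul, mul_zero]

theorem IsNormingPair.lintegral_enorm_mul_le_of_exhaustion (h : IsNormingPair μ N N')
    {A : ℕ → Set X} (hA : ∀ m, MeasurableSet (A m)) (hA_mono : Monotone A)
    (hA_fin : ∀ m, μ (A m) ≠ ∞) (hA_cover : ∀ᵐ x ∂μ, ∃ m, x ∈ A m) (hf : Measurable f)
    {G : X → ℝ≥0∞} (hG : Measurable G) (hG_le : N' G ≤ 1) {S : ℝ≥0∞}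
    (hS : ∀ g : SimpleFunc X 𝕜, (∃ m, Function.support g ⊆ A m) →
      N' (fun x => ‖g x‖ₑ) = 1 → ‖∫ x, f x * g x ∂μ‖ₑ ≤ S) :
    ∫⁻ x, ‖f x‖ₑ * G x ∂μ ≤ S := by
  obtain ⟨B, hB, hB_mono, hB_cover, hBA, hfB⟩ := exists_exhaustion_norm_le hA hA_mono hA_cover hf
  rw [lintegral_mul_eq_iSup_eapprox_restrict hB hB_mono hB_cover hf.enorm hG]
  refine iSup_le fun m => ?_
  let V : SimpleFunc X ℝ≥0∞ := (SimpleFunc.eapprox G m).restrict (B m)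
  have hV_supp : Function.support V ⊆ B m := by
    rw [SimpleFunc.coe_restrict _ (hB m)]
    exact Set.support_indicator_subset
  have hV_le_eapprox : ⇑V ≤ SimpleFunc.eapprox G m := by
    rw [SimpleFunc.coe_restrict _ (hB m)]
    exact Set.indicator_le_self _ _
  have hV_top (x : X) : V x ≠ ∞ :=
    ((hV_le_eapprox x).trans_lt (SimpleFunc.eapprox_lt_top _ _ x)).ne
  have hV_le (x : X) : V x ≤ G x := (hV_le_eapprox x).trans <|
    (le_iSup (fun k => SimpleFunc.eapprox G k x) m).trans_eq (SimpleFunc.iSup_eapprox_apply hG x)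
  have hfV : ∫⁻ x, ‖f x‖ₑ * V x ∂μ ≠ ∞ := lintegral_enorm_mul_simpleFunc_ne_top
    (ne_top_of_le_ne_top (hA_fin m) (measure_mono (hBA m))) hV_supp hV_top (hfB m)
  exact h.lintegral_enorm_mul_le_of_forall_simpleFunc hf hV_top ((h.right.mono hV_le).trans hG_le)
    hfV fun g hgV => hS g ⟨m, hgV.trans (hV_supp.trans (hBA m))⟩

theorem IsNormingPair.eq_iSup_enorm_integral (h : IsNormingPair μ N N') {A : ℕ → Set X}
    (hA : ∀ m, MeasurableSet (A m)) (hA_mono : Monotone A) (hA_fin : ∀ m, μ (A m) ≠ ∞)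
    (hA_cover : ∀ᵐ x ∂μ, ∃ m, x ∈ A m) (hf : Measurable f) :
    N (fun x => ‖f x‖ₑ) = ⨆ (g : SimpleFunc X 𝕜) (_ : ∃ m, Function.support g ⊆ A m)
      (_ : N' (fun x => ‖g x‖ₑ) = 1), ‖∫ x, f x * g x ∂μ‖ₑ := by
  refine le_antisymm ?_ (iSup_le fun g => iSup_le fun _ => iSup_le fun hg => ?_)
  · obtain ⟨G, hG, hG_le⟩ := h.exists_norming (Y := PUnit) (F := fun z => ‖f z.1‖ₑ)
      (hf.enorm.comp measurable_fst)
    refine (hG_le .unit).trans (iSup_le fun j => ?_)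
    exact h.lintegral_enorm_mul_le_of_exhaustion hA hA_mono hA_fin hA_cover hf
      ((hG j).measurable.comp measurable_prodMk_right) ((hG j).le_one .unit)
      fun g hgA hg => le_iSup_of_le g (le_iSup_of_le hgA (le_iSup_of_le hg le_rfl))
  · simpa only [hg, mul_one] using h.enorm_integral_mul_le hf g.measurable

end Pairing

section TestFunctions

theorem exists_simpleFunc_eq_sum_indicator {X β ι : Type*} [MeasurableSpace X] [AddCommMonoid β]
    (s : Finset ι) (a : ι → β) {E : ι → Set X} (hE : ∀ k, MeasurableSet (E k)) :
    ∃ g : SimpleFunc X β, ⇑g = fun x => ∑ k ∈ s, (E k).indicator (fun _ => a k) x := by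
  classical
  induction s using Finset.induction with
  | empty => exact ⟨0, rfl⟩
  | insert k s hk ih =>
    obtain ⟨g, hg⟩ := ih
    refine ⟨(SimpleFunc.const X (a k)).restrict (E k) + g, funext fun x => ?_⟩
    rw [SimpleFunc.add_apply, SimpleFunc.restrict_apply _ (hE k), Finset.sum_insert hk, hg]
    rfl

theorem simpleFunc_eq_sum_indicator_fiber {X β : Type*} [MeasurableSpace X] [AddCommMonoid β]
    [DecidableEq β] (g : SimpleFunc X β) :
    ⇑g = fun x => ∑ b ∈ g.range.erase 0, (g ⁻¹' {b}).indicator (fun _ => b) x := by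
  funext x
  rw [Finset.sum_erase g.range (f := fun b => (g ⁻¹' {b}).indicator (fun _ => b) x)
    (congrFun (Set.indicator_zero β _) x)]
  rw [Finset.sum_eq_single_of_mem (g x) (g.mem_range_self x)
    fun b _ hb => Set.indicator_of_notMem (fun hx => hb hx.symm) _]
  exact (Set.indicator_of_mem (s := g ⁻¹' {g x}) rfl _).symm

theorem mem_herzI {m : ℕ} {x : ℝ} :
    x ∈ herzI m ↔ (2 : ℝ) ^ (-(m : ℤ)) ≤ |x| ∧ |x| < (2 : ℝ) ^ (m : ℤ) := by
  have two_zpow_pos : (0 : ℝ) < 2 ^ (-(m : ℤ)) := by positivity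
  simp only [herzI, Set.mem_union, Set.mem_Ioc, Set.mem_Ico]
  rcases le_or_gt 0 x with hx | hx
  · rw [abs_of_nonneg hx, or_iff_right fun h => by linarith]
  · rw [abs_of_neg hx, or_iff_left fun h => by linarith]
    constructor <;> rintro ⟨h₁, h₂⟩ <;> constructor <;> linarith

theorem monotone_herzI : Monotone herzI := by
  intro i j hij x hx
  rw [mem_herzI] at hx ⊢
  exact ⟨(zpow_le_zpow_right₀ one_le_two (by lia)).trans hx.1,
    hx.2.trans_le (zpow_le_zpow_right₀ one_le_two (by lia))⟩

theorem exists_mem_herzI {x : ℝ} (hx : x ≠ 0) : ∃ m, x ∈ herzI m := by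
  obtain ⟨i, hi⟩ := pow_unbounded_of_one_lt |x| (one_lt_two (α := ℝ))
  obtain ⟨j, hj⟩ := pow_unbounded_of_one_lt |x|⁻¹ (one_lt_two (α := ℝ))
  refine ⟨max i j, mem_herzI.2 ?_⟩
  rw [zpow_neg, zpow_natCast]
  exact ⟨inv_le_of_inv_le₀ (abs_pos.2 hx)
      (hj.le.trans (pow_le_pow_right₀ one_le_two (le_max_right i j))),
    hi.trans_le (pow_le_pow_right₀ one_le_two (le_max_left i j))⟩

theorem monotone_herzA (n : ℕ) : Monotone (herzA n) :=
  fun _ _ hij => Set.pi_mono fun _ _ => monotone_herzI hij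

theorem measurableSet_herzA (n m : ℕ) : MeasurableSet (herzA n m) :=
  MeasurableSet.univ_pi fun _ => measurableSet_Ioc.union measurableSet_Ico

theorem volume_herzA_ne_top (n m : ℕ) : volume (herzA n m) ≠ ∞ := by
  have herzA_subset_Icc :
      herzA n m ⊆ Set.Icc (fun _ => -(2 : ℝ) ^ (m : ℤ)) fun _ => (2 : ℝ) ^ (m : ℤ) := by
    intro x hx
    have abs_le (i : Fin n) := abs_le.1 (mem_herzI.1 (hx i trivial)).2.le
    exact ⟨fun i => (abs_le i).1, fun i => (abs_le i).2⟩
  exact measure_ne_top_of_subset herzA_subset_Icc isCompact_Icc.measure_ne_top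

theorem ae_exists_mem_herzA (n : ℕ) : ∀ᵐ x : Fin n → ℝ, ∃ m, x ∈ herzA n m := by
  have ae_ne_zero : ∀ᵐ x : Fin n → ℝ, ∀ i, x i ≠ 0 := ae_all_iff.2 fun i => by
    simpa [ae_iff, volume_pi] using
      Measure.pi_hyperplane (fun _ : Fin n => (volume : Measure ℝ)) i 0
  filter_upwards [ae_ne_zero] with x hx
  choose m hm using fun i => exists_mem_herzI (hx i)
  exact ⟨Finset.univ.sup m,
    fun i _ => monotone_herzI (Finset.le_sup (Finset.mem_univ i)) (hm i)⟩

/-- The class `U` of simple functions on `ℝⁿ` which vanish outside some `A_m`, against which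
functions are tested; the sets in a representation need not be disjoint nor lie in `A_m`. -/
def IsHerzTestFunction (n : ℕ) (g : (Fin n → ℝ) → ℂ) : Prop :=
  ∃ (m N : ℕ) (a : Fin N → ℂ) (E : Fin N → Set (Fin n → ℝ)),
    (∀ k, MeasurableSet (E k) ∧ volume (E k) ≠ ∞) ∧
    (g = fun x => ∑ k, (E k).indicator (fun _ => a k) x) ∧
    ∀ x, x ∉ herzA n m → g x = 0

theorem isHerzTestFunction_simpleFunc {n m : ℕ} {g : SimpleFunc (Fin n → ℝ) ℂ}
    (hg : Function.support g ⊆ herzA n m) : IsHerzTestFunction n g := by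
  let e := (g.range.erase 0).equivFin.symm
  have fiber_subset (k) : g ⁻¹' {(e k : ℂ)} ⊆ herzA n m := fun x hx =>
    hg ((Set.mem_singleton_iff.1 hx).trans_ne (Finset.ne_of_mem_erase (e k).2))
  refine ⟨m, _, fun k => e k, fun k => g ⁻¹' {(e k : ℂ)}, fun k => ⟨g.measurableSet_fiber _,
    measure_ne_top_of_subset (fiber_subset k) (volume_herzA_ne_top n m)⟩, ?_,
    fun x hx => Function.notMem_support.1 fun h => hx (hg h)⟩
  conv_lhs => rw [simpleFunc_eq_sum_indicator_fiber g]
  funext x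
  rw [e.sum_comp fun b : g.range.erase 0 => (g ⁻¹' {(b : ℂ)}).indicator (fun _ => (b : ℂ)) x,
    Finset.sum_coe_sort (g.range.erase 0) fun b => (g ⁻¹' {b}).indicator (fun _ => b) x]

theorem isHerzTestFunction_iff {n : ℕ} {g : (Fin n → ℝ) → ℂ} :
    IsHerzTestFunction n g ↔
      ∃ s : SimpleFunc (Fin n → ℝ) ℂ, ⇑s = g ∧ ∃ m, Function.support s ⊆ herzA n m := by
  constructor
  · rintro ⟨m, N, a, E, hE, rfl, hA⟩
    obtain ⟨s, hs⟩ := exists_simpleFunc_eq_sum_indicator Finset.univ a fun k => (hE k).1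
    refine ⟨s, hs, m, fun x hx => by_contra fun hxA => hx ?_⟩
    rw [hs]
    exact hA x hxA
  · rintro ⟨s, rfl, m, hs⟩
    exact isHerzTestFunction_simpleFunc hs

end TestFunctions

theorem mixedHerz_pairing_norm_general {n : ℕ} (α : Fin n → ℝ) {p q p' q' : Fin n → ℝ≥0∞}
    (hp : ∀ i, HolderConjugate (p i) (p' i)) (hq : ∀ i, HolderConjugate (q i) (q' i))
    {f : (Fin n → ℝ) → ℂ} (hf : Measurable f) :
    herzNormC n α p q f = ⨆ (g : (Fin n → ℝ) → ℂ) (_ : IsHerzTestFunction n g)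
      (_ : herzNormC n (-α) p' q' g = 1), ‖∫ x, f x * g x‖ₑ := by
  have pairing_eq := (isNormingPair_mixedHerzNormE α hp hq).eq_iSup_enorm_integral
    (measurableSet_herzA n) (monotone_herzA n) (volume_herzA_ne_top n) (ae_exists_mem_herzA n) hf
  simp only [iSup_exists] at pairing_eq
  simp only [isHerzTestFunction_iff, iSup_exists, iSup_and]
  rw [iSup_comm]
  simp only [iSup_iSup_eq_right]
  exact pairing_eq

/-- a function whose pairings with simple functions vanishing outside
some `A_m` are uniformly bounded lies in the mixed-norm Herz space, with equal norm. -/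
theorem mixedHerz_pairing_norm (n : ℕ) (α : Fin n → ℝ) (p q p' q' : Fin n → ℝ≥0∞)
    (hp : ∀ i, 1 ≤ p i) (hq : ∀ i, 1 ≤ q i)
    (hp' : ∀ i, 1 / p i + 1 / p' i = 1) (hq' : ∀ i, 1 / q i + 1 / q' i = 1)
    (f : (Fin n → ℝ) → ℂ) (hf : Measurable f) (S : ℝ≥0∞)
    (hS : S = ⨆ (g : (Fin n → ℝ) → ℂ)
        (_ : ∃ (m N : ℕ) (a : Fin N → ℂ) (E : Fin N → Set (Fin n → ℝ)),
          (∀ k, MeasurableSet (E k) ∧ volume (E k) ≠ ∞) ∧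
          (g = fun x => ∑ k, (E k).indicator (fun _ => a k) x) ∧
          ∀ x, x ∉ herzA n m → g x = 0)
        (_ : herzNormC n (-α) p' q' g = 1),
        (‖∫ x, f x * g x‖₊ : ℝ≥0∞))
    (hfin : S ≠ ∞) :
    herzNormC n α p q f = S :=
  (mixedHerz_pairing_norm_general α (fun i => ENNReal.holderConjugate_iff.2 (by simpa using hp' i))
    (fun i => ENNReal.holderConjugate_iff.2 (by simpa using hq' i)) hf).trans hS.symm
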